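/- Let A₀ be a finite set, ρ : A₀ → ℝ with ρ_a ≥ 0 for all a, and π a nonnegative function on the nonempty subsets S ⊆ A₀, such that Σ_{S ⊆ A₀, S ≠ ∅} π(S) = Σ_{a ∈ A₀} ρ_a and, for every subset α ⊆ A₀, Σ_{a∈α} ρ_a ≤ Σ_{S : S ∩ α ≠ ∅} π(S). Then there exist nonnegative numbers y_a(S), defined for nonempty S ⊆ A₀ and a ∈ S, such that Σ_{S : a ∈ S} y_a(S) = ρ_a for every a ∈ A₀ and Σ_{a ∈ S} y_a(S) = π(S) for every nonempty S ⊆ A₀. -/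

import Mathlib

/-!
The cut conditions say that the additive set function of `ρ` is dominated by the sum, over the
sources `S`, of the functions `α ↦ π S` if `S` meets `α`, and `0` otherwise. These are submodular,
and an additive function dominated by a sum of submodular functions splits into additive functions
dominated by the individual summands. Since the total masses agree, every bound is tight on the
whole ground set, and the summands of `ρ` form the flow.

For two submodular functions the splitting is built one element at a time. Fixing the value `t` of a
summand at `a` replaces its bound `f` by another submodular function, and uncrossing shows that each
lower bound this imposes on `t` is at most each upper bound.
-/

section SetFunctions

variable {A G : Type*} [DecidableEq A]

/-- A submodular function on the finite subsets of `A`. -/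
def IsSubmodular [Add G] [LE G] (f : Finset A → G) : Prop :=
  ∀ α β, f (α ∪ β) + f (α ∩ β) ≤ f α + f β

/-- The set function bounding the slice `x a = t` of the polyhedron `{x | ∀ α, ∑ b ∈ α, x b ≤ f α}`:
on sets avoiding `a` it collects the constraints left on the other coordinates. It is extended to
all sets by ignoring `a`, which keeps it submodular. -/
def slice [Sub G] [Min G] (f : Finset A → G) (a : A) (t : G) (α : Finset A) : G :=
  min (f (α.erase a)) (f (insert a α) - t)

/-- The mass that a source of mass `m` with outlets `N` can contribute to `α`. -/
def hitMass [Zero G] (N : Finset A) (m : G) (α : Finset A) : G :=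
  if (N ∩ α).Nonempty then m else 0

theorem hitMass_le [Zero G] [Preorder G] (N : Finset A) {m : G} (hm : 0 ≤ m) (α : Finset A) :
    hitMass N m α ≤ m := by
  unfold hitMass
  split_ifs
  exacts [le_rfl, hm]

theorem nonpos_of_sum_le_hitMass [AddCommMonoid G] [Preorder G] {N : Finset A} {m : G} {x : A → G}
    (hx : ∀ α, ∑ a ∈ α, x a ≤ hitMass N m α) {a : A} (ha : a ∉ N) : x a ≤ 0 := by
  simpa [hitMass, ha] using hx {a}

end SetFunctions

section Submodular

variable {A ι G : Type*} [DecidableEq A] [AddCommGroup G] [LinearOrder G] [IsOrderedAddMonoid G]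

theorem isSubmodular_sum {f : ι → Finset A → G} {I : Finset ι}
    (hf : ∀ i ∈ I, IsSubmodular (f i)) : IsSubmodular fun α => ∑ i ∈ I, f i α := by
  intro α β
  simpa only [Finset.sum_add_distrib] using Finset.sum_le_sum fun i hi => hf i hi α β

theorem isSubmodular_hitMass (N : Finset A) {m : G} (hm : 0 ≤ m) :
    IsSubmodular (hitMass N m) := by
  intro α β
  have h_union : (N ∩ (α ∪ β)).Nonempty ↔ (N ∩ α).Nonempty ∨ (N ∩ β).Nonempty := by
    rw [Finset.inter_union_distrib_left, Finset.union_nonempty]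
  have h_left : (N ∩ (α ∩ β)).Nonempty → (N ∩ α).Nonempty := fun h => h.mono (by grind)
  have h_right : (N ∩ (α ∩ β)).Nonempty → (N ∩ β).Nonempty := fun h => h.mono (by grind)
  simp only [hitMass]
  grind

theorem isSubmodular_slice {f : Finset A → G} (hf : IsSubmodular f) (a : A) (t : G) :
    IsSubmodular (slice f a t) := by
  have h_mixed (α β : Finset A) :
      f (insert a (α ∪ β)) + f ((α ∩ β).erase a) ≤ f (α.erase a) + f (insert a β) := by
    convert hf (α.erase a) (insert a β) using 3 <;> grind
  intro α β
  have h_erase : f ((α ∪ β).erase a) + f ((α ∩ β).erase a) ≤ f (α.erase a) + f (β.erase a) := by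
    convert hf (α.erase a) (β.erase a) using 3 <;> grind
  have h_insert : f (insert a (α ∪ β)) + f (insert a (α ∩ β)) ≤
      f (insert a α) + f (insert a β) := by
    simpa only [Finset.insert_union_distrib, Finset.insert_inter_distrib]
      using hf (insert a α) (insert a β)
  have h_mixed_left := h_mixed α β
  have h_mixed_right := h_mixed β α
  rw [Finset.union_comm, Finset.inter_comm] at h_mixed_right
  simp only [slice]
  grind

theorem sum_update_le_of_sum_le_slice {f : Finset A → G} {s : Finset A} {a : A} {t : G} {x : A → G}
    (hx : ∀ α ⊆ s, ∑ b ∈ α, x b ≤ slice f a t α) :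
    ∀ α ⊆ insert a s, ∑ b ∈ α, Function.update x a t b ≤ f α := by
  intro α hα
  have h := hx (α.erase a) (Finset.subset_insert_iff.mp hα)
  by_cases haα : a ∈ α
  · rw [Finset.sum_update_of_mem haα, ← Finset.erase_eq, ← le_sub_iff_add_le']
    simpa [haα] using h.trans (min_le_right _ _)
  · rw [Finset.sum_update_of_notMem haα]
    simpa [haα] using h.trans (min_le_left _ _)

theorem sum_insert_add_sum_le_of_isSubmodular {f g : Finset A → G} (hf : IsSubmodular f)
    (hg : IsSubmodular g) {ρ : A → G} {s : Finset A} {a : A} (ha : a ∉ s)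
    (hρ : ∀ α ⊆ insert a s, ∑ b ∈ α, ρ b ≤ f α + g α) {α β : Finset A} (hα : α ⊆ s) (hβ : β ⊆ s) :
    ∑ b ∈ insert a α, ρ b + ∑ b ∈ β, ρ b ≤
      (f α + g (insert a α)) + (f (insert a β) + g β) := by
  have h_union_left : insert a α ∪ β = insert a (α ∪ β) := Finset.insert_union a α β
  have h_union_right : α ∪ insert a β = insert a (α ∪ β) := Finset.union_insert a α β
  have h_inter_left : insert a α ∩ β = α ∩ β := Finset.insert_inter_of_notMem fun h => ha (hβ h)
  have h_inter_right : α ∩ insert a β = α ∩ β := Finset.inter_insert_of_notMem fun h => ha (hα h)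
  calc ∑ b ∈ insert a α, ρ b + ∑ b ∈ β, ρ b
      = ∑ b ∈ insert a (α ∪ β), ρ b + ∑ b ∈ α ∩ β, ρ b := by
        rw [← Finset.sum_union_inter, h_union_left, h_inter_left]
    _ ≤ (f (insert a (α ∪ β)) + g (insert a (α ∪ β))) + (f (α ∩ β) + g (α ∩ β)) :=
        add_le_add (hρ _ (by grind)) (hρ _ (by grind))
    _ = (f (α ∪ insert a β) + f (α ∩ insert a β)) + (g (insert a α ∪ β) + g (insert a α ∩ β)) := by
        rw [h_union_left, h_union_right, h_inter_left, h_inter_right, add_add_add_comm]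
    _ ≤ (f α + f (insert a β)) + (g (insert a α) + g β) := add_le_add (hf _ _) (hg _ _)
    _ = (f α + g (insert a α)) + (f (insert a β) + g β) := add_add_add_comm _ _ _ _

theorem exists_sum_le_slice_add_slice {f g : Finset A → G} (hf : IsSubmodular f)
    (hg : IsSubmodular g) {ρ : A → G} {s : Finset A} {a : A} (ha : a ∉ s)
    (hρ : ∀ α ⊆ insert a s, ∑ b ∈ α, ρ b ≤ f α + g α) :
    ∃ t, ∀ α ⊆ s, ∑ b ∈ α, ρ b ≤ slice f a t α + slice g a (ρ a - t) α := by
  let lower (α : Finset A) : G := ∑ b ∈ insert a α, ρ b - (f α + g (insert a α))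
  let upper (β : Finset A) : G := f (insert a β) + g β - ∑ b ∈ β, ρ b
  have lower_le_upper : ∀ α ⊆ s, ∀ β ⊆ s, lower α ≤ upper β := fun α hα β hβ =>
    sub_le_sub_iff.mpr <| (sum_insert_add_sum_le_of_isSubmodular hf hg ha hρ hα hβ).trans_eq
      (add_comm _ _)
  have h_nonempty : s.powerset.Nonempty := Finset.powerset_nonempty s
  refine ⟨s.powerset.sup' h_nonempty lower, fun α hα => ?_⟩
  have h_lower := Finset.le_sup' lower (Finset.mem_powerset.mpr hα)
  have h_upper : s.powerset.sup' h_nonempty lower ≤ upper α :=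
    Finset.sup'_le _ _ fun β hβ => lower_le_upper β (Finset.mem_powerset.mp hβ) α hα
  generalize s.powerset.sup' h_nonempty lower = t at h_lower h_upper ⊢
  have haα : a ∉ α := fun h => ha (hα h)
  have h_erase := hρ α (hα.trans (Finset.subset_insert a s))
  have h_insert := hρ (insert a α) (Finset.insert_subset_insert a hα)
  simp only [lower, upper, Finset.sum_insert haα] at h_lower h_upper h_insert
  simp only [slice, Finset.erase_eq_of_notMem haα]
  grind

theorem exists_add_eq_and_sum_le_of_sum_le_add {f g : Finset A → G} (hf : IsSubmodular f)
    (hg : IsSubmodular g) (hf_empty : f ∅ = 0) (hg_empty : g ∅ = 0) {ρ : A → G} (s : Finset A)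
    (hρ : ∀ α ⊆ s, ∑ a ∈ α, ρ a ≤ f α + g α) :
    ∃ x z : A → G, x + z = ρ ∧
      (∀ α ⊆ s, ∑ a ∈ α, x a ≤ f α) ∧ ∀ α ⊆ s, ∑ a ∈ α, z a ≤ g α := by
  induction s using Finset.induction_on generalizing f g with
  | empty => exact ⟨ρ, 0, by simp, by simp [hf_empty], by simp [hg_empty]⟩
  | insert a s ha ih =>
    obtain ⟨t, ht⟩ := exists_sum_le_slice_add_slice hf hg ha hρ
    have hf_slice : slice f a t ∅ ≤ 0 := hf_empty ▸ min_le_left _ _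
    have hg_slice : slice g a (ρ a - t) ∅ ≤ 0 := hg_empty ▸ min_le_left _ _
    have h_slices := ht ∅ (Finset.empty_subset s)
    obtain ⟨x, z, hxz, hx, hz⟩ := ih (isSubmodular_slice hf a t)
      (isSubmodular_slice hg a (ρ a - t)) (by grind) (by grind) ht
    refine ⟨Function.update x a t, Function.update z a (ρ a - t), ?_,
      sum_update_le_of_sum_le_slice hx, sum_update_le_of_sum_le_slice hz⟩
    rw [← Function.update_add, hxz, add_sub_cancel, Function.update_eq_self]

theorem exists_le_sum_and_sum_le_of_sum_le_sum {f : ι → Finset A → G} (I : Finset ι)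
    (hf : ∀ i ∈ I, IsSubmodular (f i)) (hf_empty : ∀ i ∈ I, f i ∅ = 0) {ρ : A → G} {s : Finset A}
    (hρ : ∀ α ⊆ s, ∑ a ∈ α, ρ a ≤ ∑ i ∈ I, f i α) :
    ∃ y : ι → A → G, (∀ a ∈ s, ρ a ≤ ∑ i ∈ I, y i a) ∧
      ∀ i ∈ I, ∀ α ⊆ s, ∑ a ∈ α, y i a ≤ f i α := by
  classical
  induction I using Finset.induction_on generalizing ρ with
  | empty => exact ⟨0, fun a ha => by simpa using hρ {a} (by simpa using ha), by simp⟩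
  | insert i I hi ih =>
    simp only [Finset.forall_mem_insert, Finset.sum_insert hi] at hf hf_empty hρ ⊢
    obtain ⟨x, z, rfl, hx, hz⟩ := exists_add_eq_and_sum_le_of_sum_le_add hf.1
      (isSubmodular_sum hf.2) hf_empty.1 (Finset.sum_eq_zero hf_empty.2) s hρ
    obtain ⟨y, hzy, hy⟩ := ih hf.2 hf_empty.2 hz
    have hy_update : ∀ j ∈ I, Function.update y i x j = y j := fun j hj =>
      Function.update_of_ne (ne_of_mem_of_not_mem hj hi) x y
    refine ⟨Function.update y i x, fun a ha => ?_, by simpa using hx, fun j hj => ?_⟩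
    · rw [Function.update_self, Finset.sum_congr rfl fun j hj => congrFun (hy_update j hj) a]
      exact add_le_add_right (hzy a ha) (x a)
    · simpa only [hy_update j hj] using hy j hj

end Submodular

section Transport

variable {A ι G : Type*} [Fintype A] [DecidableEq A] [AddCommGroup G] [LinearOrder G]
  [IsOrderedAddMonoid G]

theorem nonneg_of_sum_le_hitMass {N : Finset A} {m : G} (hm : 0 ≤ m) {x : A → G}
    (hx : ∀ α, ∑ a ∈ α, x a ≤ hitMass N m α) (hx_univ : ∑ a, x a = m) (a : A) : 0 ≤ x a := by
  have h_compl : ∑ b ∈ {a}ᶜ, x b ≤ ∑ b, x b := hx_univ ▸ (hx _).trans (hitMass_le N hm _)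
  rwa [Fintype.sum_eq_add_sum_compl a, le_add_iff_nonneg_left] at h_compl

theorem exists_transport_of_cut [Fintype ι] (N : ι → Finset A) {m : ι → G} (hm : ∀ i, 0 ≤ m i)
    {ρ : A → G} (htotal : ∑ i, m i = ∑ a, ρ a)
    (hcut : ∀ α, ∑ a ∈ α, ρ a ≤ ∑ i with (N i ∩ α).Nonempty, m i) :
    ∃ y : ι → A → G, (∀ i a, 0 ≤ y i a) ∧ (∀ i, ∀ a ∉ N i, y i a = 0) ∧
      (∀ a, ∑ i, y i a = ρ a) ∧ ∀ i, ∑ a ∈ N i, y i a = m i := by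
  obtain ⟨y, h_le_sum, h_le_hitMass⟩ := exists_le_sum_and_sum_le_of_sum_le_sum Finset.univ
    (fun i _ => isSubmodular_hitMass (N i) (hm i)) (by simp [hitMass]) (s := Finset.univ)
    (fun α _ => (hcut α).trans_eq (Finset.sum_filter _ _))
  have hy (i : ι) (α : Finset A) : ∑ a ∈ α, y i a ≤ hitMass (N i) (m i) α :=
    h_le_hitMass i (Finset.mem_univ i) α (Finset.subset_univ α)
  have h_row_le (i : ι) : ∑ a, y i a ≤ m i := (hy i _).trans (hitMass_le _ (hm i) _)
  have h_rows_le : ∑ a, ∑ i, y i a ≤ ∑ a, ρ a := by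
    rw [Finset.sum_comm, ← htotal]
    exact Finset.sum_le_sum fun i _ => h_row_le i
  have h_total_eq : ∑ a, ρ a = ∑ a, ∑ i, y i a := (Finset.sum_le_sum h_le_sum).antisymm h_rows_le
  have h_col (a : A) : ∑ i, y i a = ρ a :=
    ((Finset.sum_eq_sum_iff_of_le h_le_sum).mp h_total_eq a (Finset.mem_univ a)).symm
  have h_row (i : ι) : ∑ a, y i a = m i :=
    (Finset.sum_eq_sum_iff_of_le fun i _ => h_row_le i).mp
      (by rw [Finset.sum_comm, ← h_total_eq, htotal]) i (Finset.mem_univ i)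
  have h_nonneg (i : ι) (a : A) : 0 ≤ y i a := nonneg_of_sum_le_hitMass (hm i) (hy i) (h_row i) a
  have h_support (i : ι) (a : A) (ha : a ∉ N i) : y i a = 0 :=
    (nonpos_of_sum_le_hitMass (hy i) ha).antisymm (h_nonneg i a)
  refine ⟨y, h_nonneg, h_support, h_col, fun i => ?_⟩
  rw [← h_row i]
  exact Finset.sum_subset (Finset.subset_univ _) fun a _ => h_support i a

theorem stmt_10_general (ρ : A → G) (π : Finset A → G) (hπ : ∀ S : Finset A, S ≠ ∅ → 0 ≤ π S)
    (htotal : ∑ S ∈ Finset.univ.filter (fun S : Finset A => S ≠ ∅), π S = ∑ a : A, ρ a)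
    (hcut : ∀ α : Finset A,
      ∑ a ∈ α, ρ a ≤ ∑ S ∈ Finset.univ.filter (fun S : Finset A => S ∩ α ≠ ∅), π S) :
    ∃ y : Finset A → A → G,
      (∀ S a, 0 ≤ y S a) ∧
      (∀ S a, a ∉ S → y S a = 0) ∧
      (∀ a : A, ∑ S ∈ Finset.univ.filter (fun S : Finset A => a ∈ S ∧ S ≠ ∅), y S a = ρ a) ∧
      (∀ S : Finset A, S ≠ ∅ → ∑ a ∈ S, y S a = π S) := by
  -- `π ∅` is arbitrary, possibly negative, so the empty source is given mass `0`.
  let m (S : Finset A) : G := if S ≠ ∅ then π S else 0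
  have m_of_ne {S : Finset A} (hS : S ≠ ∅) : m S = π S := if_pos hS
  have hm (S : Finset A) : 0 ≤ m S := by
    by_cases hS : S = ∅
    · simp [m, hS]
    · simpa [m, hS] using hπ S hS
  have hm_cut (α : Finset A) : ∑ a ∈ α, ρ a ≤ ∑ S with (S ∩ α).Nonempty, m S := by
    simp only [Finset.nonempty_iff_ne_empty]
    refine (hcut α).trans_eq (Finset.sum_congr rfl fun S hS => (m_of_ne ?_).symm)
    rintro rfl
    simp at hS
  obtain ⟨y, h_nonneg, h_support, h_col, h_row⟩ :=
    exists_transport_of_cut id hm ((Finset.sum_filter _ _).symm.trans htotal) hm_cut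
  refine ⟨y, h_nonneg, h_support, fun a => ?_, fun S hS => (h_row S).trans (m_of_ne hS)⟩
  rw [← h_col a]
  refine Finset.sum_filter_of_ne fun S _ hy => ?_
  have ha : a ∈ S := not_imp_comm.mp (h_support S a) hy
  exact ⟨ha, Finset.ne_empty_of_mem ha⟩

end Transport

/-- Feasibility of the tie-breaking flow. Given nonnegative capacities `ρ`
and nonnegative tie probabilities `π` on nonempty subsets of `A₀` with total mass
`Σ_S π S = Σ_a ρ_a` and satisfying the cut conditions
`Σ_{a∈α} ρ_a ≤ Σ_{S ∩ α ≠ ∅} π S` for every `α ⊆ A₀`, there is a nonnegative flow `y`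
routing the mass of each nonempty subset `S` to its members and delivering exactly `ρ_a`
to each `a ∈ A₀`. -/
theorem stmt_10 {A₀ : Type*} [Fintype A₀] [DecidableEq A₀]
    (ρ : A₀ → ℝ) (hρ : ∀ a, 0 ≤ ρ a)
    (π : Finset A₀ → ℝ) (hπ : ∀ S : Finset A₀, S ≠ ∅ → 0 ≤ π S)
    (htotal : ∑ S ∈ Finset.univ.filter (fun S : Finset A₀ => S ≠ ∅), π S = ∑ a : A₀, ρ a)
    (hcut : ∀ α : Finset A₀,
      ∑ a ∈ α, ρ a ≤ ∑ S ∈ Finset.univ.filter (fun S : Finset A₀ => S ∩ α ≠ ∅), π S) :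
    ∃ y : Finset A₀ → A₀ → ℝ,
      (∀ S a, 0 ≤ y S a) ∧
      (∀ S a, a ∉ S → y S a = 0) ∧
      (∀ a : A₀, ∑ S ∈ Finset.univ.filter (fun S : Finset A₀ => a ∈ S ∧ S ≠ ∅), y S a = ρ a) ∧
      (∀ S : Finset A₀, S ≠ ∅ → ∑ a ∈ S, y S a = π S) := by
  exact stmt_10_general ρ π hπ htotal hcut
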